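/- arXiv:0810.1981 — 2 statements merged into one kernel-verified Lean document; each statement's English description precedes it below -/
import Mathlib

section
/- There exists an n-uniform hypergraph H with maximum neighborhood size 2^(n-2) + 2^(n-3) on which Maker has a winning strategy in the Maker–Breaker game; hence the Neighborhood Conjecture (that maximum neighborhood size below 2^(n-1) implies a Breaker win) is false. -/
def MakerWinsAux {V : Type} [DecidableEq V] (E : Finset (Finset V)) :
    ℕ → Finset V → Finset V → Prop
  | 0, M, _ => ∃ e ∈ E, e ⊆ M
  | k+1, M, U =>
      (∃ e ∈ E, e ⊆ M) ∨
      ∃ v ∈ U, (∃ e ∈ E, e ⊆ insert v M) ∨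
        ((U.erase v).Nonempty ∧
          ∀ w ∈ U.erase v, MakerWinsAux E k (insert v M) ((U.erase v).erase w))

/-- Maker (moving first) has a winning strategy in the Maker-Breaker game on the
hypergraph with edge set `E`, played on the board `B`. -/
def MakerWins {V : Type} [DecidableEq V] (E : Finset (Finset V)) (B : Finset V) : Prop :=
  MakerWinsAux E B.card ∅ B


namespace NC

def lists (k : ℕ) : Finset (List Bool) :=
  (Finset.univ : Finset (List.Vector Bool k)).image List.Vector.toList

lemma mem_lists {k : ℕ} {l : List Bool} : l ∈ lists k ↔ l.length = k := by
  simp only [lists, Finset.mem_image, Finset.mem_univ, true_and]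
  constructor
  · rintro ⟨v, rfl⟩
    exact v.toList_length
  · intro h
    exact ⟨⟨l, h⟩, rfl⟩

lemma card_lists (k : ℕ) : (lists k).card = 2 ^ k := by
  rw [lists, Finset.card_image_of_injective _ List.Vector.toList_injective, Finset.card_univ,
    card_vector, Fintype.card_bool]

/-- the last `n` vertices of the path from the root to `L` -/
def edge (n : ℕ) (L : List Bool) : Finset (List Bool) :=
  (Finset.range n).image (fun i => L.drop i)

lemma mem_edge {n : ℕ} {L x : List Bool} (hL : n ≤ L.length + 1) :
    x ∈ edge n L ↔ x <:+ L ∧ L.length < x.length + n := by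
  simp only [edge, Finset.mem_image, Finset.mem_range]
  constructor
  · rintro ⟨i, hi, rfl⟩
    refine ⟨List.drop_suffix _ _, ?_⟩
    rw [List.length_drop]
    omega
  · rintro ⟨h1, h2⟩
    have := h1.length_le
    refine ⟨L.length - x.length, by omega, ?_⟩
    exact (List.suffix_iff_eq_drop.1 h1).symm

lemma card_edge {n : ℕ} {L : List Bool} (hL : n ≤ L.length + 1) : (edge n L).card = n := by
  rw [edge, Finset.card_image_of_injOn, Finset.card_range]
  intro i hi j hj hij
  have := congrArg List.length hij
  simp only [List.length_drop] at this
  simp only [Finset.coe_range, Set.mem_Iio] at hi hj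
  omega

lemma edge_inj {n : ℕ} {L L' : List Bool} (hn : 0 < n) (hL : n ≤ L.length + 1)
    (hL' : n ≤ L'.length + 1) (h : edge n L = edge n L') : L = L' := by
  have h1 : L ∈ edge n L' := h ▸ (mem_edge hL).2 ⟨List.suffix_rfl, by omega⟩
  have h2 : L' ∈ edge n L := h ▸ (mem_edge hL').2 ⟨List.suffix_rfl, by omega⟩
  have h1 := ((mem_edge hL').1 h1).1
  have h2 := ((mem_edge hL).1 h2).1
  exact h1.eq_of_length (le_antisymm h1.length_le h2.length_le)

lemma suf_eq {a b l : List Bool} (ha : a <:+ l) (hb : b <:+ l) (h : a.length = b.length) :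
    a = b :=
  (List.suffix_of_suffix_length_le ha hb h.le).eq_of_length h

/-- if `x` is a common suffix of `L`, `L'`, and `u`, `u'` are equally long suffixes of `L`, `L'`
not longer than `x`, then `u = u'` -/
lemma common {x L L' u u' : List Bool} (hx : x <:+ L) (hx' : x <:+ L') (hu : u <:+ L)
    (hu' : u' <:+ L') (h : u.length = u'.length) (hl : u.length ≤ x.length) : u = u' :=
  suf_eq ((List.suffix_of_suffix_length_le hu hx hl).trans hx') hu' h

def lA (u : List Bool) : List Bool := true :: u
def lB (a u : List Bool) : List Bool := true :: (a ++ false :: u)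
def lC (c a u : List Bool) : List Bool := c ++ false :: (a ++ false :: u)

def SA (m : ℕ) : Finset (List Bool) := (lists (m + 1)).image lA
def SB (m : ℕ) (u : List Bool) : Finset (List Bool) := (lists m).image (fun a => lB a u)
def SC (m : ℕ) (a u : List Bool) : Finset (List Bool) := (lists (m + 1)).image (fun c => lC c a u)

def leaves (m : ℕ) : Finset (List Bool) :=
  SA m ∪ ((lists (m + 1)).biUnion fun u => SB m u ∪ (lists m).biUnion fun a => SC m a u)

lemma mem_leaves {m : ℕ} {L : List Bool} : L ∈ leaves m ↔
    (∃ u, u.length = m + 1 ∧ L = lA u) ∨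
    (∃ u a, u.length = m + 1 ∧ a.length = m ∧ L = lB a u) ∨
    (∃ u a c, u.length = m + 1 ∧ a.length = m ∧ c.length = m + 1 ∧ L = lC c a u) := by
  simp only [leaves, SA, SB, SC, Finset.mem_union, Finset.mem_biUnion, Finset.mem_image, mem_lists]
  constructor
  · rintro (⟨u, hu, rfl⟩ | ⟨u, hu, ⟨a, ha, rfl⟩ | ⟨a, ha, c, hc, rfl⟩⟩)
    · exact Or.inl ⟨u, hu, rfl⟩
    · exact Or.inr (Or.inl ⟨u, a, hu, ha, rfl⟩)
    · exact Or.inr (Or.inr ⟨u, a, c, hu, ha, hc, rfl⟩)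
  · rintro (⟨u, hu, rfl⟩ | ⟨u, a, hu, ha, rfl⟩ | ⟨u, a, c, hu, ha, hc, rfl⟩)
    · exact Or.inl ⟨u, hu, rfl⟩
    · exact Or.inr ⟨u, hu, Or.inl ⟨a, ha, rfl⟩⟩
    · exact Or.inr ⟨u, hu, Or.inr ⟨a, ha, c, hc, rfl⟩⟩

lemma len_A {m : ℕ} {u : List Bool} (hu : u.length = m + 1) : (lA u).length = m + 2 := by
  simp [lA, hu]
lemma len_B {m : ℕ} {a u : List Bool} (hu : u.length = m + 1) (ha : a.length = m) :
    (lB a u).length = 2 * m + 3 := by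
  simp [lB, hu, ha]; omega
lemma len_C {m : ℕ} {c a u : List Bool} (hu : u.length = m + 1) (ha : a.length = m)
    (hc : c.length = m + 1) : (lC c a u).length = 3 * m + 4 := by
  simp [lC, hu, ha, hc]; omega

lemma len_leaf {m : ℕ} {L : List Bool} (h : L ∈ leaves m) : m + 3 ≤ L.length + 1 := by
  rcases mem_leaves.1 h with ⟨u, hu, rfl⟩ | ⟨u, a, hu, ha, rfl⟩ | ⟨u, a, c, hu, ha, hc, rfl⟩
  · rw [len_A hu]
  · rw [len_B hu ha]; omega
  · rw [len_C hu ha hc]; omega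

def meets (m : ℕ) (L L' : List Bool) : Prop :=
  ∃ x, (x <:+ L ∧ L.length < x.length + (m + 3)) ∧ (x <:+ L' ∧ L'.length < x.length + (m + 3))

lemma meets_symm {m : ℕ} {L L' : List Bool} (h : meets m L L') : meets m L' L := by
  obtain ⟨x, h1, h2⟩ := h
  exact ⟨x, h2, h1⟩

lemma inter_iff {m : ℕ} {L L' : List Bool} (h : L ∈ leaves m) (h' : L' ∈ leaves m) :
    (edge (m + 3) L ∩ edge (m + 3) L').Nonempty ↔ meets m L L' := by
  simp only [Finset.Nonempty, Finset.mem_inter, mem_edge (len_leaf h), mem_edge (len_leaf h'),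
    meets]

lemma suf_uA (u : List Bool) : u <:+ lA u := ⟨[true], rfl⟩
lemma suf_uB (a u : List Bool) : u <:+ lB a u := ⟨true :: a ++ [false], by simp [lB]⟩
lemma suf_wB (a u : List Bool) : false :: u <:+ lB a u := ⟨true :: a, by simp [lB]⟩
lemma suf_aB (a u : List Bool) : a ++ false :: u <:+ lB a u := ⟨[true], by simp [lB]⟩
lemma suf_aC (c a u : List Bool) : a ++ false :: u <:+ lC c a u := ⟨c ++ [false], by simp [lC]⟩
lemma suf_faC (c a u : List Bool) : false :: (a ++ false :: u) <:+ lC c a u := ⟨c, by simp [lC]⟩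
lemma suf_wC (c a u : List Bool) : false :: u <:+ lC c a u :=
  ⟨c ++ false :: a, by simp [lC]⟩

section
variable {m : ℕ} {u u' a a' c c' : List Bool}

lemma AB (hu : u.length = m + 1) (hu' : u'.length = m + 1) (ha' : a'.length = m)
    (h : meets m (lA u) (lB a' u')) : u = u' := by
  obtain ⟨x, ⟨h1, h2⟩, h3, h4⟩ := h
  rw [len_B hu' ha'] at h4
  exact common h1 h3 (suf_uA u) (suf_uB a' u') (by omega) (by omega)

lemma AC (hu : u.length = m + 1) (hu' : u'.length = m + 1) (ha' : a'.length = m)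
    (hc' : c'.length = m + 1) (h : meets m (lA u) (lC c' a' u')) : False := by
  obtain ⟨x, ⟨h1, h2⟩, h3, h4⟩ := h
  rw [len_C hu' ha' hc'] at h4
  have := common h1 h3 List.suffix_rfl (suf_wC c' a' u') (by simp [lA, hu, hu'])
    (by rw [len_A hu]; omega)
  simp [lA] at this

lemma BB (hu : u.length = m + 1) (ha : a.length = m) (hu' : u'.length = m + 1)
    (h : meets m (lB a u) (lB a' u')) : u = u' := by
  obtain ⟨x, ⟨h1, h2⟩, h3, h4⟩ := h
  rw [len_B hu ha] at h2
  exact common h1 h3 (suf_uB a u) (suf_uB a' u') (by omega) (by omega)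

lemma tail_inj (hu : u.length = m + 1) (hu' : u'.length = m + 1)
    (h : a ++ false :: u = a' ++ false :: u') : a = a' ∧ u = u' := by
  have := List.append_inj' h (by simp [hu, hu'])
  simpa using this

lemma BC (hu : u.length = m + 1) (ha : a.length = m) (hu' : u'.length = m + 1)
    (ha' : a'.length = m) (hc' : c'.length = m + 1)
    (h : meets m (lB a u) (lC c' a' u')) : a = a' ∧ u = u' := by
  obtain ⟨x, ⟨h1, h2⟩, h3, h4⟩ := h
  rw [len_C hu' ha' hc'] at h4
  exact tail_inj hu hu' (common h1 h3 (suf_aB a u) (suf_aC c' a' u') (by simp [*])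
    (by simp [*]; omega))

lemma CC (hu : u.length = m + 1) (ha : a.length = m) (hu' : u'.length = m + 1)
    (ha' : a'.length = m) (hc' : c'.length = m + 1)
    (h : meets m (lC c a u) (lC c' a' u')) : a = a' ∧ u = u' := by
  obtain ⟨x, ⟨h1, h2⟩, h3, h4⟩ := h
  rw [len_C hu' ha' hc'] at h4
  exact tail_inj hu hu' (common h1 h3 (suf_aC c a u) (suf_aC c' a' u') (by simp [*])
    (by simp [*]; omega))

lemma card_SA : (SA m).card = 2 ^ (m + 1) := by
  rw [SA, Finset.card_image_of_injective, card_lists]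
  intro x y h
  simpa [lA] using h

lemma card_SB : (SB m u).card = 2 ^ m := by
  rw [SB, Finset.card_image_of_injective, card_lists]
  intro x y h
  simpa [lB] using h

lemma card_SC : (SC m a u).card = 2 ^ (m + 1) := by
  rw [SC, Finset.card_image_of_injective, card_lists]
  intro x y h
  simpa [lC] using h

end

def E (m : ℕ) : Finset (Finset (List Bool)) := (leaves m).image (edge (m + 3))

open Classical in
lemma nbr_card {m : ℕ} {L : List Bool} (hL : L ∈ leaves m) :
    ((E m).filter fun f => f ≠ edge (m + 3) L ∧ (edge (m + 3) L ∩ f).Nonempty).card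
      = ((leaves m).filter fun L' => L' ≠ L ∧ meets m L L').card := by
  rw [← Finset.card_image_of_injOn (f := edge (m + 3))
    (s := (leaves m).filter fun L' => L' ≠ L ∧ meets m L L')]
  · congr 1
    ext f
    simp only [E, Finset.mem_filter, Finset.mem_image]
    constructor
    · rintro ⟨⟨L', h', rfl⟩, h1, h2⟩
      exact ⟨L', ⟨h', fun h => h1 (by rw [h]), (inter_iff hL h').1 h2⟩, rfl⟩
    · rintro ⟨L', ⟨h', h1, h2⟩, rfl⟩
      exact ⟨⟨L', h', rfl⟩,
        fun h => h1 (edge_inj (by omega) (len_leaf h') (len_leaf hL) h), (inter_iff hL h').2 h2⟩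
  · intro x hx y hy h
    simp only [Finset.coe_filter, Set.mem_ofPred_eq] at hx hy
    exact edge_inj (by omega) (len_leaf hx.1) (len_leaf hy.1) h

section
variable {m : ℕ} {u a c : List Bool}

open Classical in
lemma nbr_A (hu : u.length = m + 1) :
    ((leaves m).filter fun L' => L' ≠ lA u ∧ meets m (lA u) L').card ≤ 2 ^ (m + 1) + 2 ^ m := by
  refine (Finset.card_le_card (t := SA m ∪ SB m u) ?_).trans
    ((Finset.card_union_le _ _).trans (by rw [card_SA, card_SB]))
  intro L' h
  obtain ⟨h1, h2, h3⟩ := Finset.mem_filter.1 h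
  rcases mem_leaves.1 h1 with ⟨u', hu', rfl⟩ | ⟨u', a', hu', ha', rfl⟩ |
    ⟨u', a', c', hu', ha', hc', rfl⟩
  · exact Finset.mem_union_left _ (Finset.mem_image_of_mem _ (mem_lists.2 hu'))
  · obtain rfl := AB hu hu' ha' h3
    exact Finset.mem_union_right _ (Finset.mem_image.2 ⟨a', mem_lists.2 ha', rfl⟩)
  · exact (AC hu hu' ha' hc' h3).elim

open Classical in
lemma nbr_C (hu : u.length = m + 1) (ha : a.length = m) (hc : c.length = m + 1) :
    ((leaves m).filter fun L' => L' ≠ lC c a u ∧ meets m (lC c a u) L').card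
      ≤ 2 ^ (m + 1) + 2 ^ m := by
  refine (Finset.card_le_card (t := SC m a u ∪ {lB a u}) ?_).trans
    ((Finset.card_union_le _ _).trans ?_)
  · intro L' h
    obtain ⟨h1, h2, h3⟩ := Finset.mem_filter.1 h
    rcases mem_leaves.1 h1 with ⟨u', hu', rfl⟩ | ⟨u', a', hu', ha', rfl⟩ |
      ⟨u', a', c', hu', ha', hc', rfl⟩
    · exact (AC hu' hu ha hc (meets_symm h3)).elim
    · obtain ⟨rfl, rfl⟩ := BC hu' ha' hu ha hc (meets_symm h3)
      simp
    · obtain ⟨rfl, rfl⟩ := CC hu ha hu' ha' hc' h3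
      exact Finset.mem_union_left _ (Finset.mem_image.2 ⟨c', mem_lists.2 hc', rfl⟩)
  · rw [card_SC, Finset.card_singleton]
    have := Nat.one_le_two_pow (n := m)
    omega

open Classical in
lemma nbr_B (hu : u.length = m + 1) (ha : a.length = m) :
    ((leaves m).filter fun L' => L' ≠ lB a u ∧ meets m (lB a u) L').card
      = 2 ^ (m + 1) + 2 ^ m := by
  have key : ((leaves m).filter fun L' => L' ≠ lB a u ∧ meets m (lB a u) L')
      = insert (lA u) ((SB m u).erase (lB a u) ∪ SC m a u) := by
    ext L'
    simp only [Finset.mem_filter, Finset.mem_insert, Finset.mem_union, Finset.mem_erase]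
    constructor
    · rintro ⟨h1, h2, h3⟩
      rcases mem_leaves.1 h1 with ⟨u', hu', rfl⟩ | ⟨u', a', hu', ha', rfl⟩ |
        ⟨u', a', c', hu', ha', hc', rfl⟩
      · obtain rfl := AB hu' hu ha (meets_symm h3)
        exact Or.inl rfl
      · obtain rfl := BB hu ha hu' h3
        exact Or.inr (Or.inl ⟨h2, Finset.mem_image.2 ⟨a', mem_lists.2 ha', rfl⟩⟩)
      · obtain ⟨rfl, rfl⟩ := BC hu ha hu' ha' hc' h3
        exact Or.inr (Or.inr (Finset.mem_image.2 ⟨c', mem_lists.2 hc', rfl⟩))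
    · rintro (rfl | ⟨h1, h2⟩ | h2)
      · refine ⟨mem_leaves.2 (Or.inl ⟨u, hu, rfl⟩), ?_, u, ⟨suf_uB a u, ?_⟩, suf_uA u, ?_⟩
        · intro h
          have := congrArg List.length h
          rw [len_A hu, len_B hu ha] at this
          omega
        · rw [len_B hu ha]; omega
        · rw [len_A hu]; omega
      · obtain ⟨a', ha', rfl⟩ := Finset.mem_image.1 h2
        rw [mem_lists] at ha'
        refine ⟨mem_leaves.2 (Or.inr (Or.inl ⟨u, a', hu, ha', rfl⟩)), h1, u,
          ⟨suf_uB a u, ?_⟩, suf_uB a' u, ?_⟩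
        · rw [len_B hu ha]; omega
        · rw [len_B hu ha']; omega
      · obtain ⟨c', hc', rfl⟩ := Finset.mem_image.1 h2
        rw [mem_lists] at hc'
        refine ⟨mem_leaves.2 (Or.inr (Or.inr ⟨u, a, c', hu, ha, hc', rfl⟩)), ?_,
          a ++ false :: u, ⟨suf_aB a u, ?_⟩, suf_aC c' a u, ?_⟩
        · intro h
          have := congrArg List.length h
          rw [len_C hu ha hc', len_B hu ha] at this
          omega
        · rw [len_B hu ha]; simp [*]; omega
        · rw [len_C hu ha hc']; simp [*]; omega
  rw [key, Finset.card_insert_of_notMem, Finset.card_union_of_disjoint, Finset.card_erase_of_mem,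
    card_SB, card_SC]
  · have := Nat.one_le_two_pow (n := m)
    omega
  · exact Finset.mem_image.2 ⟨a, mem_lists.2 ha, rfl⟩
  · rw [Finset.disjoint_left]
    intro x h1 h2
    obtain ⟨a', ha', rfl⟩ := Finset.mem_image.1 (Finset.mem_of_mem_erase h1)
    obtain ⟨c', hc', h⟩ := Finset.mem_image.1 h2
    rw [mem_lists] at ha' hc'
    have := congrArg List.length h
    rw [len_C hu ha hc', len_B hu ha'] at this
    omega
  · intro h
    rcases Finset.mem_union.1 h with h | h
    · obtain ⟨a', ha', h⟩ := Finset.mem_image.1 (Finset.mem_of_mem_erase h)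
      rw [mem_lists] at ha'
      have := congrArg List.length h
      rw [len_A hu, len_B hu ha'] at this
      omega
    · obtain ⟨c', hc', h⟩ := Finset.mem_image.1 h
      rw [mem_lists] at hc'
      have := congrArg List.length h
      rw [len_C hu ha hc', len_A hu] at this
      omega

end

/-- the path-following strategy -/
lemma game {F : Finset (Finset (List Bool))} {B : Finset (List Bool)}
    (hB : ∀ p ∈ B, (∃ e ∈ F, ∀ x ∈ e, x <:+ p) ∨ (∀ b : Bool, b :: p ∈ B)) :
    ∀ (k : ℕ) (M U : Finset (List Bool)) (p : List Bool), U.card ≤ k → p ∈ B →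
      (∀ q ∈ B, p <:+ q → q ∈ U) → (∀ q, q <:+ p → q ≠ p → q ∈ M) → MakerWinsAux F k M U := by
  intro k
  induction k with
  | zero =>
    intro M U p hU hp h1 _
    have := h1 p hp List.suffix_rfl
    have := Finset.card_pos.2 ⟨p, this⟩
    omega
  | succ k ih =>
    intro M U p hU hp h1 h2
    have hpU := h1 p hp List.suffix_rfl
    rw [MakerWinsAux]
    refine Or.inr ⟨p, hpU, ?_⟩
    have hM : ∀ q, q <:+ p → q ∈ insert p M := by
      intro q hq
      by_cases h : q = p
      · simp [h]
      · exact Finset.mem_insert_of_mem (h2 q hq h)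
    rcases hB p hp with ⟨e, he, hx⟩ | hc
    · exact Or.inl ⟨e, he, fun x hxe => hM x (hx x hxe)⟩
    · have hne : ∀ (b : Bool) q, b :: p <:+ q → q ≠ p := by
        rintro b q hq rfl
        have := hq.length_le
        simp at this
      refine Or.inr ⟨⟨true :: p, Finset.mem_erase.2 ⟨hne true _ List.suffix_rfl,
        h1 _ (hc true) (List.suffix_cons _ _)⟩⟩, ?_⟩
      intro w hw
      obtain ⟨b, hb⟩ : ∃ b : Bool, ¬ (b :: p <:+ w) := by
        by_contra! h
        have := suf_eq (h true) (h false) (by simp)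
        simp at this
      refine ih _ _ (b :: p) ?_ (hc b) ?_ ?_
      · rw [Finset.card_erase_of_mem hw, Finset.card_erase_of_mem hpU]
        omega
      · intro q hq hbq
        refine Finset.mem_erase.2 ⟨?_, Finset.mem_erase.2 ⟨hne b q hbq,
          h1 q hq ((List.suffix_cons _ _).trans hbq)⟩⟩
        rintro rfl
        exact hb hbq
      · intro q hq hqne
        rcases List.suffix_cons_iff.1 hq with h | h
        · exact (hqne h).elim
        · exact hM q h

lemma suf_app {x a t : List Bool} (h : x <:+ a ++ t) :
    x <:+ t ∨ ∃ a', x = a' ++ t ∧ a' <:+ a := by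
  rcases le_total x.length t.length with hl | hl
  · exact Or.inl (List.suffix_of_suffix_length_le h (List.suffix_append _ _) hl)
  · obtain ⟨a', rfl⟩ := List.suffix_of_suffix_length_le (List.suffix_append _ _) h hl
    exact Or.inr ⟨a', rfl, List.suffix_append_self_iff.1 h⟩

def nodes (m : ℕ) : Finset (List Bool) := (E m).biUnion id

lemma mem_nodes {m : ℕ} {p : List Bool} :
    p ∈ nodes m ↔ ∃ L ∈ leaves m, p <:+ L ∧ L.length < p.length + (m + 3) := by
  simp only [nodes, E, Finset.mem_biUnion, Finset.mem_image, id]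
  constructor
  · rintro ⟨_, ⟨L, hL, rfl⟩, h⟩
    exact ⟨L, hL, (mem_edge (len_leaf hL)).1 h⟩
  · rintro ⟨L, hL, h⟩
    exact ⟨_, ⟨L, hL, rfl⟩, (mem_edge (len_leaf hL)).2 h⟩

section
variable {m : ℕ} {p u a c : List Bool}

lemma n1 (hp : p.length ≤ m + 1) : p ∈ nodes m := by
  have hu : (List.replicate (m + 1 - p.length) true ++ p).length = m + 1 := by simp; omega
  refine mem_nodes.2 ⟨lA (List.replicate (m + 1 - p.length) true ++ p),
    mem_leaves.2 (Or.inl ⟨_, hu, rfl⟩), ?_, by rw [len_A hu]; omega⟩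
  exact (List.suffix_append _ _).trans (suf_uA _)

lemma n2 (hu : u.length = m + 1) : lA u ∈ nodes m :=
  mem_nodes.2 ⟨_, mem_leaves.2 (Or.inl ⟨_, hu, rfl⟩), List.suffix_rfl, by omega⟩

lemma n3 (hu : u.length = m + 1) (ha : a.length ≤ m) : a ++ false :: u ∈ nodes m := by
  have ha' : (List.replicate (m - a.length) true ++ a).length = m := by simp; omega
  refine mem_nodes.2 ⟨lB (List.replicate (m - a.length) true ++ a) u,
    mem_leaves.2 (Or.inr (Or.inl ⟨_, _, hu, ha', rfl⟩)), ?_, by rw [len_B hu ha']; simp [hu]; omega⟩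
  exact ⟨true :: List.replicate (m - a.length) true, by simp [lB]⟩

lemma n4 (hu : u.length = m + 1) (ha : a.length = m) : lB a u ∈ nodes m :=
  mem_nodes.2 ⟨_, mem_leaves.2 (Or.inr (Or.inl ⟨_, _, hu, ha, rfl⟩)), List.suffix_rfl, by omega⟩

lemma n5 (hu : u.length = m + 1) (ha : a.length = m) (hc : c.length ≤ m + 1) :
    lC c a u ∈ nodes m := by
  have hc' : (List.replicate (m + 1 - c.length) true ++ c).length = m + 1 := by simp; omega
  refine mem_nodes.2 ⟨lC (List.replicate (m + 1 - c.length) true ++ c) a u,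
    mem_leaves.2 (Or.inr (Or.inr ⟨_, _, _, hu, ha, hc', rfl⟩)), ?_, ?_⟩
  · exact ⟨List.replicate (m + 1 - c.length) true, by simp [lC]⟩
  · rw [len_C hu ha hc']; simp [lC, hu, ha]; omega

/-- children of inner nodes of the top tree -/
lemma ch1 (hp : p.length ≤ m + 1) (b : Bool) : b :: p ∈ nodes m := by
  rcases Nat.lt_or_ge p.length (m + 1) with h | h
  · exact n1 (by simpa using h)
  · have h : p.length = m + 1 := le_antisymm hp h
    cases b
    · exact n3 (a := []) h (by simp)
    · exact n2 h

lemma ch3 (hu : u.length = m + 1) (ha : a.length ≤ m) (b : Bool) :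
    b :: (a ++ false :: u) ∈ nodes m := by
  rcases Nat.lt_or_ge a.length m with h | h
  · exact n3 (a := b :: a) hu (by simpa using h)
  · have h : a.length = m := le_antisymm ha h
    cases b
    · exact n5 (c := []) hu h (by simp)
    · exact n4 hu h

lemma inner_or_leaf (h : p ∈ nodes m) : p ∈ leaves m ∨ ∀ b : Bool, b :: p ∈ nodes m := by
  obtain ⟨L, hL, h1, h2⟩ := mem_nodes.1 h
  rcases mem_leaves.1 hL with ⟨u, hu, rfl⟩ | ⟨u, a, hu, ha, rfl⟩ | ⟨u, a, c, hu, ha, hc, rfl⟩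
  · rcases List.suffix_cons_iff.1 h1 with rfl | h1
    · exact Or.inl hL
    · exact Or.inr (ch1 (hu ▸ h1.length_le))
  · rcases List.suffix_cons_iff.1 h1 with rfl | h1
    · exact Or.inl hL
    · refine Or.inr ?_
      rcases suf_app h1 with h1 | ⟨a', rfl, h5⟩
      · rcases List.suffix_cons_iff.1 h1 with rfl | h1
        · exact ch3 (a := []) hu (by simp)
        · exact ch1 (hu ▸ h1.length_le)
      · exact ch3 hu (ha ▸ h5.length_le)
  · rw [len_C hu ha hc] at h2
    rcases suf_app h1 with h1 | ⟨c', rfl, h5⟩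
    · rcases List.suffix_cons_iff.1 h1 with rfl | h1
      · exact Or.inr fun b => n5 (c := [b]) hu ha (by simp)
      · have hl : p.length = (a ++ false :: u).length := by
          refine le_antisymm h1.length_le ?_
          simp [hu, ha]; omega
        obtain rfl := h1.eq_of_length hl
        exact Or.inr (ch3 hu ha.le)
    · rcases h5.length_le.lt_or_eq with h | h
      · exact Or.inr fun b => n5 (c := b :: c') hu ha (by simp; omega)
      · obtain rfl := h5.eq_of_length h
        exact Or.inl hL

end

end NC

/-- Disproof of the Neighborhood Conjecture: there is an `n`-uniform hypergraph
with maximum neighborhood size `2^(n-2) + 2^(n-3)` on which Maker has a winning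
strategy. -/
theorem neighborhood_conjecture_false (n : ℕ) (hn : 3 ≤ n) :
    ∃ E : Finset (Finset (List Bool)),
      (∀ e ∈ E, e.card = n) ∧
      (∀ e ∈ E, ((E.filter fun f => f ≠ e ∧ (e ∩ f).Nonempty).card)
          ≤ 2 ^ (n - 2) + 2 ^ (n - 3)) ∧
      (∃ e ∈ E, ((E.filter fun f => f ≠ e ∧ (e ∩ f).Nonempty).card)
          = 2 ^ (n - 2) + 2 ^ (n - 3)) ∧
      MakerWins E (E.biUnion id) := by
  obtain ⟨m, rfl⟩ : ∃ m, n = m + 3 := ⟨n - 3, by omega⟩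
  have e1 : m + 3 - 2 = m + 1 := by omega
  have e2 : m + 3 - 3 = m := by omega
  rw [e1, e2]
  refine ⟨NC.E m, ?_, ?_, ?_, ?_⟩
  · intro e he
    obtain ⟨L, hL, rfl⟩ := Finset.mem_image.1 he
    exact NC.card_edge (NC.len_leaf hL)
  · intro e he
    obtain ⟨L, hL, rfl⟩ := Finset.mem_image.1 he
    rw [NC.nbr_card hL]
    rcases NC.mem_leaves.1 hL with ⟨u, hu, rfl⟩ | ⟨u, a, hu, ha, rfl⟩ | ⟨u, a, c, hu, ha, hc, rfl⟩
    · exact NC.nbr_A hu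
    · exact (NC.nbr_B hu ha).le
    · exact NC.nbr_C hu ha hc
  · have hu : (List.replicate (m + 1) true).length = m + 1 := by simp
    have ha : (List.replicate m true).length = m := by simp
    have hL := NC.mem_leaves.2 (Or.inr (Or.inl ⟨_, _, hu, ha, rfl⟩))
    refine ⟨_, Finset.mem_image_of_mem _ hL, ?_⟩
    rw [NC.nbr_card hL]
    exact NC.nbr_B hu ha
  · refine NC.game (B := NC.nodes m) ?_ _ _ _ [] le_rfl (NC.n1 (by simp)) (fun q hq _ => hq) ?_
    · intro p hp
      refine (NC.inner_or_leaf hp).imp_left fun h => ⟨_, Finset.mem_image_of_mem _ h, ?_⟩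
      intro x hx
      exact ((NC.mem_edge (NC.len_leaf h)).1 hx).1
    · intro q hq hne
      exact (hne (List.suffix_nil.1 hq)).elim
end

section
/- There exists an n-uniform hypergraph H with maximum vertex degree at most 2^(n-1)/n on which Maker has a winning strategy in the Maker–Breaker game. -/
/-! ### Pairing strategy -/

theorem pairing_aux {V : Type} [DecidableEq V] (E : Finset (Finset V)) (σ : V → V)
    (hσ : ∀ v, σ (σ v) = v)
    (hE : ∀ S : Finset V, (∀ v ∈ S, σ v ∉ S) → ∃ e ∈ E, Disjoint e S) :
    ∀ (k : ℕ) (M U R : Finset V) (p : V), U.card ≤ k →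
      (∀ e ∈ E, e ⊆ M ∪ U ∪ R) →
      (∀ v ∈ R, σ v ∉ R ∧ (σ v ∈ U → σ v = p)) →
      (∀ v ∈ U, σ v = v → v = p) →
      MakerWinsAux E k M U := by
  have fin : ∀ (M R : Finset V), (∀ e ∈ E, e ⊆ M ∪ R) → (∀ v ∈ R, σ v ∉ R) →
      ∃ e ∈ E, e ⊆ M := by
    intro M R h1 h2
    obtain ⟨e, he, hd⟩ := hE R h2
    refine ⟨e, he, fun a ha => ?_⟩
    rcases Finset.mem_union.1 (h1 e he ha) with h | h
    · exact h
    · exact absurd h (Finset.disjoint_left.1 hd ha)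
  intro k
  induction k with
  | zero =>
    intro M U R p hU h1 h2 _
    have : U = ∅ := by simpa using hU
    subst this
    exact fin M R (by simpa using h1) (fun v hv => (h2 v hv).1)
  | succ k ih =>
    intro M U R p hU h1 h2 h3
    by_cases hne : U = ∅
    · subst hne
      exact Or.inl (fin M R (by simpa using h1) (fun v hv => (h2 v hv).1))
    · right
      have hv : ∃ v ∈ U, p ∈ U → v = p := by
        by_cases hp : p ∈ U
        · exact ⟨p, hp, fun _ => rfl⟩
        · obtain ⟨v, hv⟩ := Finset.nonempty_iff_ne_empty.2 hne
          exact ⟨v, hv, fun h => absurd h hp⟩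
      obtain ⟨v, hvU, hvp⟩ := hv
      refine ⟨v, hvU, ?_⟩
      have k2 : ∀ u ∈ R, σ u ∉ U.erase v := by
        intro u hu hmem
        rw [Finset.mem_erase] at hmem
        have := (h2 u hu).2 hmem.2
        exact hmem.1 (by rw [this, hvp (this ▸ hmem.2)])
      have k3 : ∀ u ∈ U.erase v, σ u ≠ u := by
        intro u hu h
        rw [Finset.mem_erase] at hu
        have := h3 u hu.2 h
        exact hu.1 (by rw [this, hvp (this ▸ hu.2)])
      by_cases hem : U.erase v = ∅
      · left
        refine fin (insert v M) R (fun e he a ha => ?_) (fun v hv => (h2 v hv).1)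
        have h := h1 e he ha
        have : a ∈ U → a = v := by
          intro haU
          by_contra hne'
          have : a ∈ U.erase v := Finset.mem_erase.2 ⟨hne', haU⟩
          simp [hem] at this
        simp only [Finset.mem_union, Finset.mem_insert] at h ⊢
        tauto
      · right
        refine ⟨Finset.nonempty_iff_ne_empty.2 hem, fun w hw => ?_⟩
        refine ih _ _ (insert w R) (σ w) ?_ ?_ ?_ ?_
        · rw [Finset.card_erase_of_mem hw, Finset.card_erase_of_mem hvU]; omega
        · intro e he a ha
          have h := h1 e he ha
          simp only [Finset.mem_union, Finset.mem_insert, Finset.mem_erase] at h ⊢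
          tauto
        · intro u hu
          rcases Finset.mem_insert.1 hu with rfl | hu
          · refine ⟨?_, fun _ => rfl⟩
            rw [Finset.mem_insert]
            rintro (h | h)
            · exact k3 u hw h
            · exact k2 _ h (by rw [hσ]; exact hw)
          · refine ⟨?_, fun h => absurd (Finset.mem_of_mem_erase h) (k2 u hu)⟩
            rw [Finset.mem_insert]
            rintro (h | h)
            · exact k2 u hu (h ▸ hw)
            · exact (h2 u hu).1 h
        · intro u hu h
          exact absurd h (k3 u (Finset.mem_of_mem_erase hu))

/-! ### Binary trees -/

inductive BT where
  | leaf : BT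
  | node : BT → BT → BT

namespace BT

def leaves : BT → List Bool → Finset (List Bool)
  | leaf, p => {p}
  | node l r, p => leaves l (true :: p) ∪ leaves r (false :: p)

def cnt : BT → ℕ → ℕ
  | leaf, 0 => 1
  | leaf, _ + 1 => 0
  | node _ _, 0 => 0
  | node l r, j + 1 => cnt l j + cnt r j

def Good (n d : ℕ) : BT → Prop
  | leaf => True
  | node l r => Good n d l ∧ Good n d r ∧ ∑ j ∈ Finset.range n, cnt (node l r) j ≤ d

theorem suffix_leaves (t : BT) : ∀ p, ∀ q ∈ leaves t p, p <:+ q := by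
  induction t with
  | leaf => intro p q hq; simp [leaves] at hq; subst hq; exact List.suffix_refl _
  | node l r ihl ihr =>
    intro p q hq
    simp only [leaves, Finset.mem_union] at hq
    rcases hq with hq | hq
    · exact (List.suffix_cons _ _).trans (ihl _ _ hq)
    · exact (List.suffix_cons _ _).trans (ihr _ _ hq)

theorem avoid (t : BT) (S : Finset (List Bool))
    (hS : ∀ p : List Bool, true :: p ∈ S → false :: p ∉ S) :
    ∀ p : List Bool, p ∉ S → ∃ q ∈ leaves t p, ∀ u, u <:+ q → p <:+ u → u ∉ S := by
  induction t with
  | leaf =>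
    intro p hp
    refine ⟨p, by simp [leaves], fun u h1 h2 => ?_⟩
    rwa [← h2.eq_of_length_le h1.length_le]
  | node l r ihl ihr =>
    intro p hp
    have key : ∀ (b : Bool) (q : List Bool), (b :: p) <:+ q →
        (∀ u, u <:+ q → (b :: p) <:+ u → u ∉ S) → ∀ u, u <:+ q → p <:+ u → u ∉ S := by
      intro b q hq h u hu hpu
      by_cases hl : u.length ≤ p.length
      · rwa [← hpu.eq_of_length_le hl]
      · exact h u hu (List.suffix_of_suffix_length_le hq hu (by simp; omega))
    by_cases h : true :: p ∈ S
    · obtain ⟨q, hq, h'⟩ := ihr _ (hS p h)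
      exact ⟨q, by simp [leaves, hq], key false q (suffix_leaves _ _ _ hq) h'⟩
    · obtain ⟨q, hq, h'⟩ := ihl _ h
      exact ⟨q, by simp [leaves, hq], key true q (suffix_leaves _ _ _ hq) h'⟩

theorem card_short (t : BT) : ∀ (n : ℕ) (p : List Bool),
    ((leaves t p).filter fun q => q.length < p.length + n).card
      ≤ ∑ j ∈ Finset.range n, cnt t j := by
  induction t with
  | leaf =>
    intro n p
    cases n with
    | zero => simp [leaves]
    | succ n =>
      rw [Finset.sum_range_succ']
      refine (Finset.card_filter_le _ _).trans ?_
      simp [leaves, cnt]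
  | node l r ihl ihr =>
    intro n p
    cases n with
    | zero =>
      simp only [Finset.range_zero, Finset.sum_empty, Nat.le_zero, Finset.card_eq_zero]
      rw [Finset.filter_eq_empty_iff]
      intro q hq
      have := (suffix_leaves _ _ _ hq).length_le
      omega
    | succ n =>
      rw [Finset.sum_range_succ']
      simp only [leaves, cnt, Finset.filter_union, Finset.sum_add_distrib, add_zero]
      refine (Finset.card_union_le _ _).trans (add_le_add ?_ ?_)
      · have := ihl n (true :: p)
        simpa [Nat.add_assoc, Nat.add_comm 1 n] using this
      · have := ihr n (false :: p)
        simpa [Nat.add_assoc, Nat.add_comm 1 n] using this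

theorem deg_le (n d : ℕ) (hd : 1 ≤ d) (t : BT) : Good n d t → ∀ (p v : List Bool),
    p.length ≤ v.length →
    ((leaves t p).filter fun q => v <:+ q ∧ q.length < v.length + n).card ≤ d := by
  induction t with
  | leaf =>
    intro _ p v _
    refine (Finset.card_filter_le _ _).trans ?_
    simpa [leaves] using hd
  | node l r ihl ihr =>
    intro hG p v hpv
    by_cases hl : v.length ≤ p.length
    · refine le_trans ?_ hG.2.2
      refine le_trans (Finset.card_le_card ?_) (card_short (node l r) n p)
      intro q hq
      rw [Finset.mem_filter] at hq ⊢
      exact ⟨hq.1, by omega⟩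
    · have emp : ∀ (b : Bool) (t : BT), ¬ (b :: p) <:+ v →
          ((leaves t (b :: p)).filter fun q => v <:+ q ∧ q.length < v.length + n) = ∅ := by
        intro b t hb
        rw [Finset.filter_eq_empty_iff]
        rintro q hq ⟨h1, _⟩
        exact hb (List.suffix_of_suffix_length_le (suffix_leaves _ _ _ hq) h1 (by simp; omega))
      simp only [leaves, Finset.filter_union]
      by_cases ht : (true :: p) <:+ v
      · have hf : ¬ (false :: p) <:+ v := by
          intro hf
          have := List.suffix_of_suffix_length_le ht hf (by simp)
          have := this.eq_of_length_le (by simp)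
          simp at this
        rw [emp false r hf, Finset.union_empty]
        exact ihl hG.1 _ _ (by simp; omega)
      · rw [emp true l ht, Finset.empty_union]
        exact ihr hG.2.1 _ _ (by simp; omega)

end BT

/-! ### Realizable leaf-count vectors -/

def Rlz (n d : ℕ) (x : ℕ → ℕ) : Prop :=
  ∃ t : BT, t.Good n d ∧ ∀ j < n, t.cnt j ≤ x j

theorem rlz_leaf (n d : ℕ) (x : ℕ → ℕ) (h : 1 ≤ x 0) : Rlz n d x := by
  refine ⟨BT.leaf, trivial, fun j _ => ?_⟩
  cases j with
  | zero => simpa [BT.cnt] using h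
  | succ j => simp [BT.cnt]

theorem rlz_node (n d : ℕ) (x y z : ℕ → ℕ) (hx : ∑ j ∈ Finset.range n, x j ≤ d)
    (hy : Rlz n d y) (hz : Rlz n d z) (h : ∀ j, j + 1 < n → y j + z j ≤ x (j + 1)) :
    Rlz n d x := by
  obtain ⟨s, hs, hs'⟩ := hy
  obtain ⟨t, ht, ht'⟩ := hz
  have key : ∀ j < n, (BT.node s t).cnt j ≤ x j := by
    intro j hj
    cases j with
    | zero => simp [BT.cnt]
    | succ j =>
      simp only [BT.cnt]
      have := hs' j (by omega)
      have := ht' j (by omega)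
      have := h j hj
      omega
  exact ⟨BT.node s t, ⟨hs, ht, le_trans (Finset.sum_le_sum fun j hj =>
    key j (Finset.mem_range.1 hj)) hx⟩, key⟩

theorem sum_shift (n : ℕ) (x y : ℕ → ℕ)
    (h : ∀ j < n, y j ≤ if j + 1 < n then x (j + 1) else 0) :
    ∑ j ∈ Finset.range n, y j ≤ ∑ j ∈ Finset.range n, x j := by
  cases n with
  | zero => simp
  | succ m =>
    rw [Finset.sum_range_succ, Finset.sum_range_succ' x]
    have h1 := h m (by omega)
    simp only [lt_self_iff_false, if_false, Nat.le_zero] at h1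
    have : ∑ j ∈ Finset.range m, y j ≤ ∑ j ∈ Finset.range m, x (j + 1) := by
      refine Finset.sum_le_sum fun j hj => ?_
      have hj := Finset.mem_range.1 hj
      have := h j (by omega)
      rwa [if_pos (by omega)] at this
    omega

theorem kraft_sum_succ (k : ℕ) (x : ℕ → ℕ) :
    ∑ j ∈ Finset.range (k + 2), x j * 2 ^ (k + 1 - j)
      = 2 * (∑ j ∈ Finset.range (k + 1), x j * 2 ^ (k - j)) + x (k + 1) := by
  rw [Finset.sum_range_succ, Finset.mul_sum]
  congr 1
  · refine Finset.sum_congr rfl fun j hj => ?_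
    have hj := Finset.mem_range.1 hj
    rw [show k + 1 - j = (k - j) + 1 by omega, pow_succ]; ring
  · simp

theorem split_exists (k : ℕ) : ∀ (x : ℕ → ℕ) (m : ℕ),
    m * 2 ^ k ≤ ∑ j ∈ Finset.range (k + 1), x j * 2 ^ (k - j) →
    ∃ y : ℕ → ℕ, (∀ j, y j ≤ x j) ∧
      ∑ j ∈ Finset.range (k + 1), y j * 2 ^ (k - j) = m * 2 ^ k := by
  induction k with
  | zero =>
    intro x m h
    refine ⟨fun j => if j = 0 then m else 0, fun j => ?_, by simp⟩
    by_cases hj : j = 0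
    · subst hj; simpa using h
    · simp [hj]
  | succ k ih =>
    intro x m h
    rw [kraft_sum_succ] at h
    have e1 : m * 2 ^ (k + 1) = 2 * (m * 2 ^ k) := by rw [pow_succ]; ring
    by_cases hc : m * 2 ^ k ≤ ∑ j ∈ Finset.range (k + 1), x j * 2 ^ (k - j)
    · obtain ⟨y, hy, hs⟩ := ih x m hc
      refine ⟨fun j => if j ≤ k then y j else 0, fun j => ?_, ?_⟩
      · dsimp only; split_ifs
        · exact hy j
        · simp
      · rw [kraft_sum_succ, e1, ← hs]
        simp only [show ¬ k + 1 ≤ k by omega, if_false, add_zero]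
        congr 1
        refine Finset.sum_congr rfl fun j hj => ?_
        have hj := Finset.mem_range.1 hj
        rw [if_pos (by omega)]
    · refine ⟨fun j => if j ≤ k then x j else if j = k + 1 then
        m * 2 ^ (k + 1) - 2 * (∑ j ∈ Finset.range (k + 1), x j * 2 ^ (k - j)) else 0,
        fun j => ?_, ?_⟩
      · dsimp only; split_ifs with h1 h2
        · exact le_rfl
        · subst h2; omega
        · simp
      · rw [kraft_sum_succ]
        simp only [show ¬ k + 1 ≤ k by omega, if_false, if_true]
        have : ∑ j ∈ Finset.range (k + 1), (if j ≤ k then x j else if j = k + 1 then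
            m * 2 ^ (k + 1) - 2 * (∑ j ∈ Finset.range (k + 1), x j * 2 ^ (k - j)) else 0)
              * 2 ^ (k - j) = ∑ j ∈ Finset.range (k + 1), x j * 2 ^ (k - j) := by
          refine Finset.sum_congr rfl fun j hj => ?_
          have hj := Finset.mem_range.1 hj
          rw [if_pos (by omega)]
        rw [this]
        omega

theorem kraft (n d k : ℕ) : ∀ (x : ℕ → ℕ), k < n → ∑ j ∈ Finset.range n, x j ≤ d →
    2 ^ k ≤ ∑ j ∈ Finset.range (k + 1), x j * 2 ^ (k - j) → Rlz n d x := by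
  induction k with
  | zero =>
    intro x _ _ h
    exact rlz_leaf _ _ _ (by simpa using h)
  | succ k ih =>
    intro x hk hx h
    by_cases h0 : 1 ≤ x 0
    · exact rlz_leaf _ _ _ h0
    have h0 : x 0 = 0 := by omega
    rw [Finset.sum_range_succ', h0] at h
    simp only [Nat.add_sub_add_right, zero_mul, add_zero] at h
    have hp : 2 ^ (k + 1) = 2 * 2 ^ k := by rw [pow_succ]; ring
    obtain ⟨y, hy, hs⟩ := split_exists k (fun j => x (j + 1)) 1 (by omega)
    have hy : ∀ j, y j ≤ x (j + 1) := hy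
    have tr : ∀ (u : ℕ → ℕ), (∀ j, u j ≤ x (j + 1)) →
        2 ^ k ≤ ∑ j ∈ Finset.range (k + 1), u j * 2 ^ (k - j) →
        Rlz n d (fun j => if j + 1 < n then u j else 0) := by
      intro u hu hsum
      refine ih _ (by omega) (le_trans (sum_shift n x _ fun j _ => ?_) hx) ?_
      · split_ifs
        · exact hu j
        · simp
      · refine hsum.trans_eq (Finset.sum_congr rfl fun j hj => ?_)
        have hj := Finset.mem_range.1 hj
        rw [if_pos (by omega)]
    refine rlz_node n d x _ _ hx (tr y hy (by omega)) (tr (fun j => x (j + 1) - y j)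
      (fun j => Nat.sub_le _ _) ?_) ?_
    · have : ∑ j ∈ Finset.range (k + 1), (x (j + 1) - y j) * 2 ^ (k - j)
          + ∑ j ∈ Finset.range (k + 1), y j * 2 ^ (k - j)
          = ∑ j ∈ Finset.range (k + 1), x (j + 1) * 2 ^ (k - j) := by
        rw [← Finset.sum_add_distrib]
        refine Finset.sum_congr rfl fun j _ => ?_
        rw [← add_mul, Nat.sub_add_cancel (hy j)]
      omega
    · intro j hj
      simp only [if_pos hj]
      have := hy j
      omega

/-- Kraft with a profile. -/
theorem kraft_profile (n d e : ℕ) (x g : ℕ → ℕ) (hx : ∑ j ∈ Finset.range n, x j ≤ d)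
    (he : e < n) (hg : ∀ j < n, e ≤ j → g j * 2 ^ (j - e) ≤ x j)
    (hs : 2 ^ e ≤ ∑ j ∈ Finset.Ico e n, g j) : Rlz n d x := by
  refine kraft n d (n - 1) x (by omega) hx ?_
  rw [show n - 1 + 1 = n by omega]
  calc 2 ^ (n - 1) = 2 ^ e * 2 ^ (n - 1 - e) := by rw [← pow_add]; congr 1; omega
    _ ≤ (∑ j ∈ Finset.Ico e n, g j) * 2 ^ (n - 1 - e) := Nat.mul_le_mul_right _ hs
    _ = ∑ j ∈ Finset.Ico e n, g j * 2 ^ (n - 1 - e) := Finset.sum_mul _ _ _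
    _ ≤ ∑ j ∈ Finset.Ico e n, x j * 2 ^ (n - 1 - j) := by
        refine Finset.sum_le_sum fun j hj => ?_
        have hj := Finset.mem_Ico.1 hj
        rw [show n - 1 - e = (j - e) + (n - 1 - j) by omega, pow_add, ← mul_assoc]
        exact Nat.mul_le_mul_right _ (hg j hj.2 hj.1)
    _ ≤ ∑ j ∈ Finset.range n, x j * 2 ^ (n - 1 - j) := by
        refine Finset.sum_le_sum_of_subset fun j hj => ?_
        have hj := Finset.mem_Ico.1 hj
        exact Finset.mem_range.2 hj.2

/-- Every valid vector dominating the profile `g` is realizable. -/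
def Prof (n d e : ℕ) (g : ℕ → ℕ) : Prop :=
  ∀ x : ℕ → ℕ, ∑ j ∈ Finset.range n, x j ≤ d →
    (∀ j < n, e ≤ j → g j * 2 ^ (j - e) ≤ x j) → Rlz n d x

theorem prof_halve (n d e : ℕ) (g g' : ℕ → ℕ) (hd : e < n → 2 ^ 7 * 2 ^ (n - 1 - e) ≤ d / 2)
    (h : Prof n d e g')
    (h1 : ∀ j, j + 1 < n → g' j ≤ g (j + 1)) (h2 : g' (n - 1) ≤ 2 ^ 7) : Prof n d e g := by
  intro x hx hg
  have hy : Rlz n d (fun j => if j + 1 < n then x (j + 1) / 2 else d / 2) := by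
    apply h
    · cases n with
      | zero => simp
      | succ m =>
        rw [Finset.sum_range_succ]
        rw [Finset.sum_range_succ'] at hx
        simp only [lt_self_iff_false, if_false]
        have : ∑ j ∈ Finset.range m, (if j + 1 < m + 1 then x (j + 1) / 2 else d / 2) * 2
            ≤ ∑ j ∈ Finset.range m, x (j + 1) := by
          refine Finset.sum_le_sum fun j hj => ?_
          have hj := Finset.mem_range.1 hj
          rw [if_pos (by omega)]
          omega
        rw [← Finset.sum_mul] at this
        omega
    · intro j hj hej
      split_ifs with hc
      · have a1 := hg (j + 1) hc (by omega)
        rw [show j + 1 - e = (j - e) + 1 by omega, pow_succ, ← mul_assoc] at a1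
        have a2 := Nat.mul_le_mul_right (2 ^ (j - e)) (h1 j hc)
        omega
      · have : j = n - 1 := by omega
        subst this
        exact (Nat.mul_le_mul_right _ h2).trans (hd (by omega))
  refine rlz_node n d x _ _ hx hy hy fun j hj => ?_
  simp only [if_pos hj]
  omega

theorem prof_halves (n d e : ℕ) (hd : e < n → 2 ^ 7 * 2 ^ (n - 1 - e) ≤ d / 2) (h : ℕ) :
    ∀ (g g' : ℕ → ℕ), Prof n d e g' →
    (∀ j, j + h < n → g' j ≤ g (j + h)) → (∀ j < n, n ≤ j + h → g' j ≤ 2 ^ 7) →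
    Prof n d e g := by
  induction h with
  | zero =>
    intro g g' hP h1 _ x hx hg
    exact hP x hx fun j hj hej => (Nat.mul_le_mul_right _ (h1 j hj)).trans (hg j hj hej)
  | succ h ih =>
    intro g g' hP h1 h2
    refine prof_halve n d e g (fun j => if j + 1 < n then g (j + 1) else 2 ^ 7) hd
      (ih _ g' hP ?_ ?_) ?_ ?_
    · intro j hj
      split_ifs with hc
      · exact h1 j hc
      · exact h2 j (by omega) (by omega)
    · intro j hj hj2
      exact h2 j hj (by omega)
    · intro j hj
      simp [hj]
    · rcases Nat.eq_zero_or_pos n with hn | hn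
      · subst hn; simp
      · rw [if_neg (by omega)]

theorem prof_cut (n d e p : ℕ) (g g' : ℕ → ℕ) (he : 2 ≤ e) (hen : e < n) (hp : p ≤ n)
    (h : Prof n d e g') (hs : 2 ^ e ≤ 4 * ∑ j ∈ Finset.Ico e p, g j)
    (h0 : ∀ j, j + 2 < p → g' j = 0) (h1 : ∀ j, n ≤ j + 2 → g' j = 0)
    (h2 : ∀ j, p ≤ j + 2 → j + 2 < n → 3 * g' j ≤ 4 * g (j + 2)) : Prof n d e g := by
  intro x hx hg
  have hA : Rlz n d (fun j => if j + 2 < p then x (j + 2) else 0) := by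
    refine kraft_profile n d (e - 2) _ (fun j => if j + 2 < p then g (j + 2) else 0)
      ?_ (by omega) ?_ ?_
    · refine le_trans (sum_shift n (fun j => if j + 1 < n then x (j + 1) else 0) _ ?_)
        (le_trans (sum_shift n x _ ?_) hx)
      · intro j _
        split_ifs <;> first | omega | exact le_rfl
      · intro j _
        split_ifs <;> first | omega | exact le_rfl
    · intro j hj hej
      split_ifs with hc
      · have := hg (j + 2) (by omega) (by omega)
        rwa [show j + 2 - e = j - (e - 2) by omega] at this
      · simp
    · have e1 : 2 ^ e = 4 * 2 ^ (e - 2) := by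
        rw [show (4 : ℕ) = 2 ^ 2 by norm_num, ← pow_add]; congr 1; omega
      have e2 : ∑ j ∈ Finset.Ico e p, g j ≤
          ∑ j ∈ Finset.Ico (e - 2) n, if j + 2 < p then g (j + 2) else 0 := by
        have : ∑ j ∈ Finset.Ico (e - 2) n, (if j + 2 < p then g (j + 2) else 0)
            = ∑ j ∈ Finset.Ico (e - 2 + 2) (n + 2), if j < p then g j else 0 :=
          Finset.sum_Ico_add' (fun j => if j < p then g j else 0) (e - 2) n 2
        rw [this, show e - 2 + 2 = e by omega]
        calc ∑ j ∈ Finset.Ico e p, g j = ∑ j ∈ Finset.Ico e p, if j < p then g j else 0 := by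
              refine Finset.sum_congr rfl fun j hj => ?_
              rw [if_pos (Finset.mem_Ico.1 hj).2]
          _ ≤ _ := Finset.sum_le_sum_of_subset (Finset.Ico_subset_Ico le_rfl (by omega))
      omega
  have hY : Rlz n d (fun j => if j + 2 < p then 0 else if j + 2 < n then x (j + 2) / 3 else 0) := by
    apply h
    · refine le_trans (sum_shift n (fun j => if j + 1 < n then x (j + 1) else 0) _ ?_)
        (le_trans (sum_shift n x _ ?_) hx)
      · intro j _
        simp only [add_assoc, Nat.reduceAdd]
        split_ifs <;> omega
      · intro j _
        split_ifs <;> first | omega | exact le_rfl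
    · intro j hj hej
      split_ifs with hc hc'
      · simp [h0 j hc]
      · have a1 := hg (j + 2) hc' (by omega)
        rw [show j + 2 - e = (j - e) + 2 by omega, pow_add, ← mul_assoc] at a1
        have a2 := Nat.mul_le_mul_right (2 ^ (j - e)) (h2 j (by omega) hc')
        rw [mul_assoc, mul_assoc] at a2
        omega
      · simp [h1 j (by omega)]
  have hW1 : Rlz n d (fun j => if j + 1 < p then x (j + 1) else
      if j + 1 < n then x (j + 1) / 3 else 0) := by
    refine rlz_node n d _ _ _ (le_trans (sum_shift n x _ ?_) hx) hA hY ?_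
    · intro j _
      split_ifs <;> omega
    · intro j hj
      simp only [add_assoc, Nat.reduceAdd]
      split_ifs <;> omega
  have hW2 : Rlz n d (fun j => if j + 1 < p then 0 else
      if j + 1 < n then 2 * (x (j + 1) / 3) else 0) := by
    refine rlz_node n d _ _ _ (le_trans (sum_shift n x _ ?_) hx) hY hY ?_
    · intro j _
      split_ifs <;> omega
    · intro j hj
      simp only [add_assoc, Nat.reduceAdd]
      split_ifs <;> omega
  refine rlz_node n d x _ _ hx hW1 hW2 ?_
  intro j hj
  split_ifs <;> omega

/-! ### Block profiles -/

def blockProf (q e : ℕ) (b : List ℕ) (j : ℕ) : ℕ :=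
  if e ≤ j % q then b.getD (j / q) 0 else 0

theorem take_sum (b : List ℕ) : ∀ a, (b.take a).sum = ∑ i ∈ Finset.range a, b.getD i 0 := by
  induction b with
  | nil => intro a; simp
  | cons c b ih =>
    intro a
    cases a with
    | zero => simp
    | succ a =>
      rw [Finset.sum_range_succ']
      simp [ih, add_comm]

theorem blockProf_sum (q e : ℕ) (hq : e < q) (b : List ℕ) (a : ℕ) :
    ∑ j ∈ Finset.range (a * q), blockProf q e b j = (q - e) * (b.take a).sum := by
  rw [take_sum]
  induction a with
  | zero => simp
  | succ a ih =>
    rw [Finset.sum_range_succ, Nat.succ_mul, Finset.sum_range_add, ih, mul_add]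
    congr 1
    have : ∀ r ∈ Finset.range q, blockProf q e b (a * q + r)
        = if e ≤ r then b.getD a 0 else 0 := by
      intro r hr
      have hr := Finset.mem_range.1 hr
      unfold blockProf
      rw [Nat.add_comm, Nat.add_mul_mod_self_right, Nat.add_mul_div_right _ _ (by omega),
        Nat.mod_eq_of_lt hr, Nat.div_eq_of_lt hr, zero_add]
    rw [Finset.sum_congr rfl this, ← Finset.sum_filter, Finset.sum_const]
    have : (Finset.range q).filter (fun r => e ≤ r) = Finset.Ico e q := by
      ext r; simp [and_comm]
    rw [this, Nat.card_Ico, smul_eq_mul]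

theorem blockProf_sum_Ico (q e : ℕ) (hq : e < q) (b : List ℕ) (a : ℕ) :
    ∑ j ∈ Finset.Ico e (a * q), blockProf q e b j = (q - e) * (b.take a).sum := by
  rw [← blockProf_sum q e hq]
  refine Finset.sum_subset (fun j hj => ?_) fun j hj hj' => ?_
  · exact Finset.mem_range.2 (Finset.mem_Ico.1 hj).2
  · have hj := Finset.mem_range.1 hj
    rw [Finset.mem_Ico] at hj'
    have := Nat.mod_le j q
    unfold blockProf
    rw [if_neg (by omega)]

def stepL (a : ℕ) (b : List ℕ) : List ℕ :=
  (b.drop a).map (fun v => 4 * v / 3) ++ List.replicate a 128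

def run : List ℕ → List ℕ → Bool
  | [], b => decide (8193 ≤ (b.take 32).sum)
  | a :: as, b => decide (1 ≤ a) && decide (a ≤ 32) && decide (8193 ≤ 4 * (b.take a).sum)
      && run as (stepL a b)

theorem run_ok : run [17, 13, 12, 10, 10, 10, 9, 9, 8, 8, 7, 7, 7, 6, 6, 6, 6]
    (List.replicate 32 128) = true := by
  rfl

theorem run_prof (q e d : ℕ) (he : 2 ≤ e) (hq : 8193 * e ≤ q) (hpow : 2 ^ e = 8192 * q)
    (hd : 2 ^ 7 * 2 ^ (32 * q - 1 - e) ≤ d / 2) : ∀ (as b : List ℕ), b.length = 32 →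
    run as b = true → Prof (32 * q) d e (blockProf q e b) := by
  have hbig : ∀ S, 8193 ≤ S → 2 ^ e ≤ (q - e) * S := by
    intro S hS
    refine le_trans ?_ (Nat.mul_le_mul_left _ hS)
    omega
  intro as
  induction as with
  | nil =>
    intro b _ hr x hx hg
    simp only [run, decide_eq_true_eq] at hr
    refine kraft_profile _ d e x _ hx (by omega) hg ?_
    rw [blockProf_sum_Ico q e (by omega)]
    exact hbig _ hr
  | cons a as ih =>
    intro b hb hr
    simp only [run, Bool.and_eq_true, decide_eq_true_eq] at hr
    obtain ⟨⟨⟨ha1, ha2⟩, hsum⟩, hr⟩ := hr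
    have hlen : (stepL a b).length = 32 := by
      simp [stepL, hb]; omega
    have hP := ih _ hlen hr
    have haq : q ≤ a * q := Nat.le_mul_of_pos_left _ ha1
    have haq2 : a * q ≤ 32 * q := Nat.mul_le_mul_right _ ha2
    refine prof_cut (32 * q) d e (a * q) _ (fun j => if j + 2 < a * q then 0 else
      if j + 2 < 32 * q then 4 * blockProf q e b (j + 2) / 3 else 0) he (by omega) haq2
      (prof_halves _ d e (fun _ => hd) (a * q - 2) _ (blockProf q e (stepL a b)) hP ?_ ?_)
      ?_ ?_ ?_ ?_
    · intro j hj
      rw [if_neg (by omega), show j + (a * q - 2) + 2 = j + a * q by omega]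
      by_cases hc : j + a * q < 32 * q
      · rw [if_pos hc]
        unfold blockProf
        rw [Nat.add_mul_mod_self_right, Nat.add_mul_div_right _ _ (by omega)]
        split_ifs
        · have hjq : j / q + a < 32 := by
            rw [← Nat.add_mul_div_right _ _ (by omega : 0 < q)]
            exact (Nat.div_lt_iff_lt_mul (by omega)).2 hc
          generalize j / q = i at hjq
          unfold stepL
          rw [List.getD_append _ _ _ _ (by simp [hb]; omega)]
          simp [List.getD_eq_getElem?_getD, List.getElem?_map, List.getElem?_drop,
            add_comm a i, List.getElem?_eq_getElem (show i + a < b.length by omega)]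
        · simp
      · rw [if_neg hc]
        unfold blockProf
        rw [if_neg]
        · obtain ⟨c, hc2⟩ : ∃ c, 32 = a + c := ⟨32 - a, by omega⟩
          rw [hc2, add_mul] at hc hj
          obtain ⟨r, hr⟩ : ∃ r, j = r + c * q := ⟨j - c * q, by omega⟩
          rw [hr, Nat.add_mul_mod_self_right, Nat.mod_eq_of_lt (by omega)]
          omega
    · intro j hj hj2
      unfold blockProf
      split_ifs with hc
      · have hjq : 32 ≤ j / q + a := by
          rw [← Nat.add_mul_div_right _ _ (by omega : 0 < q), Nat.le_div_iff_mul_le (by omega)]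
          by_contra hlt
          obtain ⟨c, hc2⟩ : ∃ c, 32 = a + c := ⟨32 - a, by omega⟩
          rw [hc2, add_mul] at hlt hj2
          omega
        generalize j / q = i at hjq
        unfold stepL
        rw [List.getD_append_right _ _ _ _ (by simp [hb]; omega)]
        rw [List.getD_eq_getElem?_getD, List.getElem?_replicate]
        split_ifs <;> simp
      · simp
    · rw [blockProf_sum_Ico q e (by omega)]
      calc 2 ^ e ≤ (q - e) * (4 * (b.take a).sum) := hbig _ hsum
        _ = _ := by ring
    · intro j hj
      simp [hj]
    · intro j hj
      split_ifs <;> first | rfl | omega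
    · intro j hj hj2
      simp only [if_neg (show ¬ j + 2 < a * q by omega), if_pos hj2]
      omega

theorem rlz_zero (q e d : ℕ) (he : 2 ≤ e) (hq : 8193 * e ≤ q) (hpow : 2 ^ e = 8192 * q)
    (hd : 2 ^ 7 * 2 ^ (32 * q - 1 - e) ≤ d / 2) : Rlz (32 * q) d (fun _ => 0) := by
  have h := run_prof q e d he hq hpow hd _ _ (by simp) run_ok
  have h0 : Prof (32 * q) d e (fun _ => 0) := by
    refine prof_halves _ d e (fun _ => hd) (32 * q) _ _ h (fun j hj => by omega) ?_
    intro j hj _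
    unfold blockProf
    split_ifs
    · generalize j / q = i
      rw [List.getD_eq_getElem?_getD, List.getElem?_replicate]
      split_ifs <;> simp
    · simp
  exact h0 _ (by simp) (by simp)

/-! ### From trees to hypergraphs -/

def edgeOf (n : ℕ) (q : List Bool) : Finset (List Bool) :=
  (Finset.range n).image fun i => q.drop i

theorem edgeOf_card (n : ℕ) (q : List Bool) (h : n ≤ q.length) : (edgeOf n q).card = n := by
  unfold edgeOf
  rw [Finset.card_image_of_injOn, Finset.card_range]
  intro i hi j hj hij
  have hi := Finset.mem_range.1 hi
  have hj := Finset.mem_range.1 hj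
  have := congrArg List.length hij
  simp only [List.length_drop] at this
  omega

theorem mem_edgeOf (n : ℕ) (q v : List Bool) (h : v ∈ edgeOf n q) (hq : n ≤ q.length) :
    v <:+ q ∧ q.length < v.length + n := by
  unfold edgeOf at h
  obtain ⟨i, hi, rfl⟩ := Finset.mem_image.1 h
  have hi := Finset.mem_range.1 hi
  refine ⟨List.drop_suffix _ _, ?_⟩
  simp only [List.length_drop]
  omega

def sib : List Bool → List Bool
  | [] => []
  | b :: l => (!b) :: l

theorem hypergraph_of_tree (n d : ℕ) (hd : 1 ≤ d) (h : Rlz n d (fun _ => 0)) :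
    ∃ E : Finset (Finset (List Bool)),
      (∀ e ∈ E, e.card = n) ∧
      (∀ v : List Bool, (E.filter fun e => v ∈ e).card ≤ d) ∧
      MakerWins E (E.biUnion id) := by
  obtain ⟨t, hG, hc⟩ := h
  have hlong : ∀ q ∈ t.leaves [], n ≤ q.length := by
    intro q hq
    by_contra hlt
    have h1 := t.card_short n []
    have h2 : ∑ j ∈ Finset.range n, t.cnt j = 0 :=
      Finset.sum_eq_zero fun j hj => Nat.le_zero.1 (hc j (Finset.mem_range.1 hj))
    rw [h2, Nat.le_zero, Finset.card_eq_zero, Finset.filter_eq_empty_iff] at h1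
    exact h1 hq (by simp; omega)
  refine ⟨(t.leaves []).image (edgeOf n), ?_, ?_, ?_⟩
  · intro e he
    obtain ⟨q, hq, rfl⟩ := Finset.mem_image.1 he
    exact edgeOf_card n q (hlong q hq)
  · intro v
    refine le_trans ?_ (t.deg_le n d hd hG [] v (by simp))
    rw [Finset.filter_image]
    refine Finset.card_image_le.trans (Finset.card_le_card fun q hq => ?_)
    rw [Finset.mem_filter] at hq ⊢
    exact ⟨hq.1, mem_edgeOf n q v hq.2 (hlong q hq.1)⟩
  · refine pairing_aux _ sib ?_ ?_ _ ∅ _ ∅ [] le_rfl ?_ (by simp) ?_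
    · intro v
      cases v <;> simp [sib]
    · intro S hS
      obtain ⟨q, hq, hav⟩ := t.avoid S (fun p hp => by simpa [sib] using hS _ hp) []
        (fun h0 => hS [] h0 h0)
      refine ⟨edgeOf n q, Finset.mem_image_of_mem _ hq, Finset.disjoint_left.2 fun u hu => ?_⟩
      exact hav u (mem_edgeOf n q u hu (hlong q hq)).1 (List.nil_suffix)
    · intro e he
      simp only [Finset.empty_union, Finset.union_empty]
      exact Finset.subset_biUnion_of_mem id he
    · intro v _ hv
      cases v with
      | nil => rfl
      | cons b l => simp [sib] at hv

/-- There is an `n`-uniform hypergraph with maximum degree at most `2^(n-1)/n`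
(for `n` a sufficiently large power of 2) on which Maker has a winning strategy. -/
theorem maker_win_max_degree_small : ∃ n₀ : ℕ, ∀ n : ℕ, n₀ ≤ n → (∃ k, n = 2 ^ k) →
    ∃ E : Finset (Finset (List Bool)),
      (∀ e ∈ E, e.card = n) ∧
      (∀ v : List Bool, n * (E.filter fun e => v ∈ e).card ≤ 2 ^ (n - 1)) ∧
      MakerWins E (E.biUnion id) := by
  refine ⟨2 ^ 24, ?_⟩
  rintro n hn ⟨L, rfl⟩
  have hL : 24 ≤ L := (Nat.pow_le_pow_iff_right (by norm_num)).1 hn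
  obtain ⟨m, rfl⟩ : ∃ m, L = m + 24 := ⟨L - 24, by omega⟩
  have hm : m + 1 ≤ 2 ^ m := Nat.lt_two_pow_self
  have hn32 : 2 ^ (m + 24) = 32 * 2 ^ (m + 19) := by rw [pow_add, pow_add]; ring
  have hq19 : 2 ^ (m + 19) = 524288 * 2 ^ m := by rw [pow_add]; ring
  have hz : Rlz (2 ^ (m + 24)) (2 ^ (2 ^ (m + 24) - 1 - (m + 24))) (fun _ => 0) := by
    rw [hn32]
    refine rlz_zero (2 ^ (m + 19)) (m + 32) _ (by omega) (by omega) ?_ ?_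
    · rw [pow_add, pow_add]; ring
    · rw [← pow_add, Nat.le_div_iff_mul_le (by norm_num), ← pow_succ]
      refine Nat.pow_le_pow_right (by norm_num) (by omega)
  obtain ⟨E, h1, h2, h3⟩ := hypergraph_of_tree _ _ Nat.one_le_two_pow hz
  refine ⟨E, h1, fun v => ?_, h3⟩
  refine (Nat.mul_le_mul_left _ (h2 v)).trans ?_
  rw [← pow_add]
  exact Nat.pow_le_pow_right (by norm_num) (by omega)
end
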